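/- arXiv:2307.12311 — 3 statements merged into one kernel-verified Lean document; each statement's English description precedes it below -/
import Mathlib

section
/- For every positive integer m ≤ 4356, there exists a subset A of Z/mZ such that 1 ≤ σ_A(n) ≤ 132 for every n in Z/mZ. -/
theorem stmt_1 (m : ℕ) (hm : 0 < m) (hm' : m ≤ 4356) :
    ∃ A : Finset (ZMod m), ∀ n : ZMod m,
      1 ≤ ((A ×ˢ A).filter (fun p => p.1 + p.2 = n)).card ∧
      ((A ×ˢ A).filter (fun p => p.1 + p.2 = n)).card ≤ 132 := by
  have : NeZero m := ⟨hm.ne'⟩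
  let B : Finset ℕ := Finset.range 67 ∪ (Finset.Icc 2 66).image (fun k => k * 66)
  have hB : B.card ≤ 132 := by
    refine (Finset.card_union_le _ _).trans ?_
    have h1 : ((Finset.Icc 2 66).image (fun k => k * 66)).card ≤ 65 :=
      Finset.card_image_le.trans (by simp)
    have h2 : (Finset.range 67).card = 67 := Finset.card_range _
    omega
  have hlow : ∀ r, r < 67 → r ∈ B := fun r hr =>
    Finset.mem_union_left _ (Finset.mem_range.2 hr)
  have hmul : ∀ q, q ≤ 66 → q * 66 ∈ B := by
    intro q hq
    by_cases h : 2 ≤ q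
    · exact Finset.mem_union_right _
        (Finset.mem_image.2 ⟨q, Finset.mem_Icc.2 ⟨h, hq⟩, rfl⟩)
    · exact hlow _ (by omega)
  clear_value B
  refine ⟨B.image (fun k : ℕ => (k : ZMod m)), fun n => ⟨?_, ?_⟩⟩
  · rw [Nat.one_le_iff_ne_zero, ← Nat.pos_iff_ne_zero, Finset.card_pos]
    have hn := ZMod.val_lt n
    refine ⟨(((n.val % 66 : ℕ) : ZMod m), ((n.val / 66 * 66 : ℕ) : ZMod m)), ?_⟩
    refine Finset.mem_filter.2 ⟨Finset.mem_product.2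
      ⟨Finset.mem_image_of_mem _ (hlow _ (by omega)),
        Finset.mem_image_of_mem _ (hmul _ (by omega))⟩, ?_⟩
    have h : n.val % 66 + n.val / 66 * 66 = n.val := by omega
    show ((n.val % 66 : ℕ) : ZMod m) + ((n.val / 66 * 66 : ℕ) : ZMod m) = n
    rw [← Nat.cast_add, h, ZMod.natCast_zmod_val]
  · refine le_trans ?_ ((Finset.card_image_le (f := fun k : ℕ => (k : ZMod m))).trans hB)
    refine Finset.card_le_card_of_injOn Prod.fst ?_ ?_
    · intro p hp
      exact (Finset.mem_product.1 (Finset.mem_filter.1 hp).1).1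
    · intro p hp q hq h
      have h1 := (Finset.mem_filter.1 hp).2
      have h2 := (Finset.mem_filter.1 hq).2
      refine Prod.ext h ?_
      rw [← h2, h] at h1
      exact add_left_cancel h1
end

section
/- For every real number x ≥ 33, there exists a prime p with x < p ≤ 2x/√3. -/
open ArithmeticFunction in
/-- Chebyshev's identity for `log N!`. -/
lemma log_factorial_eq (N : ℕ) :
    Real.log (N.factorial : ℝ) = ∑ n ∈ Finset.Ioc 0 N, vonMangoldt n * ((N / n : ℕ) : ℝ) := by
  rw [← sum_Ioc_mul_zeta_eq_sum, vonMangoldt_mul_zeta]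
  induction N with
  | zero => simp
  | succ k ih =>
    rw [Nat.factorial_succ, Finset.sum_Ioc_succ_top (by omega), ← ih]
    push_cast
    rw [Real.log_mul (by positivity) (by positivity), log_apply]
    push_cast
    ring

lemma log_factorial_div_eq (M t : ℕ) :
    Real.log ((M / t).factorial : ℝ) =
      ∑ n ∈ Finset.Ioc 0 M, ArithmeticFunction.vonMangoldt n * ((M / n / t : ℕ) : ℝ) := by
  rw [log_factorial_eq]
  have hsub : Finset.Ioc 0 (M / t) ⊆ Finset.Ioc 0 M :=
    Finset.Ioc_subset_Ioc le_rfl (Nat.div_le_self _ _)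
  rw [← Finset.sum_subset hsub]
  · refine Finset.sum_congr rfl fun n _ => ?_
    rw [Nat.div_div_eq_div_mul, Nat.div_div_eq_div_mul, mul_comm t n]
  · intro n hn hn'
    simp only [Finset.mem_Ioc, not_and, not_le] at hn hn'
    have : M / n / t = 0 := by
      rw [Nat.div_div_eq_div_mul, mul_comm, ← Nat.div_div_eq_div_mul]
      exact Nat.div_eq_of_lt (hn' hn.1)
    simp [this]

/-- The scheme of weights. -/
def wts : List (ℕ × ℤ) := [(7, 1), (8, -1), (14, -1), (16, 1), (21, -1), (24, 1), (35, -1), (40, 1), (48, -1), (56, 1), (80, -1), (84, 1), (105, 1), (112, -1), (120, -1), (140, 2), (168, -1), (240, 1), (280, -2), (336, 1), (840, 2), (1680, 2)]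

def Fsum (l : List (ℕ × ℤ)) (v : ℕ) : ℤ := (l.map fun p => p.2 * ((v / p.1 : ℕ) : ℤ)).sum

lemma Fsum_add (l : List (ℕ × ℤ)) (hl : ∀ p ∈ l, 0 < p.1 ∧ p.1 ∣ 1680) (a b : ℕ) :
    Fsum l (1680 * a + b) = a * Fsum l 1680 + Fsum l b := by
  induction l with
  | nil => simp [Fsum]
  | cons q l ih =>
    have h1 := ih (fun p hp => hl p (List.mem_cons_of_mem _ hp))
    obtain ⟨h0, c, hc⟩ := hl q List.mem_cons_self
    simp only [Fsum, List.map_cons, List.sum_cons] at h1 ⊢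
    rw [h1]
    have e1 : (1680 * a + b) / q.1 = c * a + b / q.1 := by
      rw [hc, mul_assoc, Nat.mul_add_div h0]
    have e2 : 1680 / q.1 = c := by rw [hc, Nat.mul_div_cancel_left _ h0]
    rw [e1, e2]
    push_cast
    ring

lemma Fsum_small : ∀ v < 1680, Fsum wts v ≤ if v = 7 then 1 else 0 := by
  decide +kernel

lemma Fsum_le (v : ℕ) :
    Fsum wts v ≤ (if v = 7 then 1 else 0) + (if 1687 ≤ v then 1 else 0) := by
  have h := Fsum_add wts (by decide) (v / 1680) (v % 1680)
  rw [Nat.div_add_mod, show Fsum wts 1680 = 0 by decide +kernel, mul_zero, zero_add] at h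
  have h2 := Fsum_small (v % 1680) (Nat.mod_lt _ (by norm_num))
  rw [h]
  refine h2.trans ?_
  split_ifs <;> omega

lemma sum_wts_log (l : List (ℕ × ℤ)) (M : ℕ) :
    (l.map fun p => (p.2 : ℝ) * Real.log ((M / p.1).factorial : ℝ)).sum =
      ∑ n ∈ Finset.Ioc 0 M, ArithmeticFunction.vonMangoldt n * (Fsum l (M / n) : ℝ) := by
  induction l with
  | nil => simp [Fsum]
  | cons q l ih =>
    rw [List.map_cons, List.sum_cons, ih, log_factorial_div_eq, Finset.mul_sum,
      ← Finset.sum_add_distrib]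
    refine Finset.sum_congr rfl fun n _ => ?_
    have hF : Fsum (q :: l) (M / n) = q.2 * ((M / n / q.1 : ℕ) : ℤ) + Fsum l (M / n) := by
      simp only [Fsum, List.map_cons, List.sum_cons]
    rw [hF, Int.cast_add, Int.cast_mul, Int.cast_natCast]
    ring

/-- Upper bound for the weighted sum in terms of Chebyshev functions, if no prime is in range. -/
lemma sum_wts_upper (M : ℕ) (hno : ∀ p : ℕ, p.Prime → M < 8 * p → 7 * p ≤ M → False) :
    (wts.map fun p => (p.2 : ℝ) * Real.log ((M / p.1).factorial : ℝ)).sum ≤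
      (Chebyshev.psi ((M : ℝ) / 7) - Chebyshev.theta ((M : ℝ) / 7)) +
        Chebyshev.psi ((M : ℝ) / 1687) := by
  rw [sum_wts_log, Chebyshev.psi_sub_theta_eq_sum_not_prime, Chebyshev.psi]
  have f1 : ⌊(M : ℝ) / 7⌋₊ = M / 7 := by
    have := Nat.floor_div_natCast (M : ℝ) 7
    rw [Nat.floor_natCast] at this
    exact_mod_cast this
  have f2 : ⌊(M : ℝ) / 1687⌋₊ = M / 1687 := by
    have := Nat.floor_div_natCast (M : ℝ) 1687
    rw [Nat.floor_natCast] at this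
    exact_mod_cast this
  rw [f1, f2]
  have s1 : (Finset.Ioc 0 (M / 7)).filter (fun n => ¬ n.Prime) =
      (Finset.Ioc 0 M).filter (fun n => n ≤ M / 7 ∧ ¬ n.Prime) := by
    ext n
    simp only [Finset.mem_filter, Finset.mem_Ioc]
    constructor
    · rintro ⟨⟨h1, h2⟩, h3⟩
      exact ⟨⟨h1, by omega⟩, h2, h3⟩
    · rintro ⟨⟨h1, h2⟩, h3, h4⟩
      exact ⟨⟨h1, h3⟩, h4⟩
  have s2 : Finset.Ioc 0 (M / 1687) = (Finset.Ioc 0 M).filter (fun n => n ≤ M / 1687) := by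
    ext n
    simp only [Finset.mem_filter, Finset.mem_Ioc]
    omega
  rw [s1, s2, Finset.sum_filter, Finset.sum_filter, ← Finset.sum_add_distrib]
  refine Finset.sum_le_sum fun n hn => ?_
  have hn0 : 0 < n := (Finset.mem_Ioc.mp hn).1
  have hL : 0 ≤ ArithmeticFunction.vonMangoldt n := ArithmeticFunction.vonMangoldt_nonneg
  have hF : (Fsum wts (M / n) : ℝ) ≤
      (if M / n = 7 then 1 else 0) + (if 1687 ≤ M / n then 1 else 0) := by
    exact_mod_cast Fsum_le (M / n)
  refine (mul_le_mul_of_nonneg_left hF hL).trans ?_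
  rw [mul_add]
  refine add_le_add ?_ ?_
  · by_cases h : M / n = 7
    · have h7 : 7 * n ≤ M := (Nat.le_div_iff_mul_le hn0).mp h.ge
      have h8 : M < 8 * n := (Nat.div_lt_iff_lt_mul hn0).mp (by omega)
      have hp : ¬ n.Prime := fun hp => hno n hp h8 h7
      rw [if_pos h, if_pos ⟨by omega, hp⟩, mul_one]
    · rw [if_neg h, mul_zero]
      split_ifs <;> first | exact hL | exact le_rfl
  · by_cases h : 1687 ≤ M / n
    · have h7 : 1687 * n ≤ M := (Nat.le_div_iff_mul_le hn0).mp h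
      rw [if_pos h, if_pos (by omega), mul_one]
    · rw [if_neg h, mul_zero]
      split_ifs <;> first | exact hL | exact le_rfl

/-- Crude Stirling bounds. -/
lemma log_fact_bounds (k : ℕ) :
    ((k : ℝ) + 1) * Real.log (k + 1) - k ≤ Real.log ((k + 1).factorial : ℝ) ∧
    Real.log ((k + 1).factorial : ℝ) ≤
      ((k : ℝ) + 1) * Real.log (k + 1) - k + Real.log (k + 1) := by
  induction k with
  | zero => simp
  | succ k ih =>
    have hf : Real.log ((k + 1 + 1).factorial : ℝ) =
        Real.log ((k : ℝ) + 2) + Real.log ((k + 1).factorial : ℝ) := by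
      rw [Nat.factorial_succ]
      push_cast
      rw [Real.log_mul (by positivity) (by positivity)]
      ring_nf
    have hk : (0 : ℝ) < k + 1 := by positivity
    have hk2 : (0 : ℝ) < k + 2 := by positivity
    have a1 : ((k : ℝ) + 1) * (Real.log (k + 2) - Real.log (k + 1)) ≤ 1 := by
      rw [← Real.log_div hk2.ne' hk.ne']
      have := Real.log_le_sub_one_of_pos (div_pos hk2 hk)
      calc ((k : ℝ) + 1) * Real.log ((k + 2) / (k + 1))
          ≤ (k + 1) * ((k + 2) / (k + 1) - 1) := mul_le_mul_of_nonneg_left this hk.le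
        _ = 1 := by field_simp; ring
    have a2 : 1 ≤ ((k : ℝ) + 2) * (Real.log (k + 2) - Real.log (k + 1)) := by
      have := Real.log_le_sub_one_of_pos (div_pos hk hk2)
      rw [Real.log_div hk.ne' hk2.ne'] at this
      have := mul_le_mul_of_nonneg_left this hk2.le
      have e : ((k : ℝ) + 2) * ((k + 1) / (k + 2) - 1) = -1 := by field_simp; ring
      nlinarith
    obtain ⟨i1, i2⟩ := ih
    rw [hf]
    push_cast
    rw [show (k : ℝ) + 1 + 1 = k + 2 by ring]
    constructor <;> nlinarith

/-- `y log y - y` is increasing on `[1, ∞)`. -/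
lemma mul_log_mono {a b : ℝ} (ha : 1 ≤ a) (hab : a ≤ b) :
    a * Real.log a - a ≤ b * Real.log b - b := by
  have h0 : 0 < a := by linarith
  have hb : 0 < b := by linarith
  have h1 := Real.log_le_sub_one_of_pos (div_pos h0 hb)
  rw [Real.log_div h0.ne' hb.ne'] at h1
  have h2 := mul_le_mul_of_nonneg_left h1 hb.le
  have e : b * (a / b - 1) = a - b := by field_simp
  have h3 : 0 ≤ Real.log a := Real.log_nonneg ha
  nlinarith

lemma stirling_real (M t : ℕ) (ht : 0 < t) (htM : t ≤ M) :
    |Real.log ((M / t).factorial : ℝ) -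
      (M : ℝ) / t * (Real.log M - Real.log t - 1)| ≤ Real.log M + 1 := by
  have htR : (0 : ℝ) < t := by exact_mod_cast ht
  have hMR : (0 : ℝ) < M := by exact_mod_cast lt_of_lt_of_le ht htM
  obtain ⟨k, hk⟩ : ∃ k, M / t = k + 1 := ⟨M / t - 1, by
    have := Nat.div_pos htM ht
    omega⟩
  have l1 : ((k : ℝ) + 1) ≤ (M : ℝ) / t := by
    rw [le_div_iff₀ htR]
    exact_mod_cast (Nat.le_div_iff_mul_le ht).mp hk.ge
  have l2 : (M : ℝ) / t ≤ (k : ℝ) + 2 := by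
    rw [div_le_iff₀ htR]
    exact_mod_cast ((Nat.div_lt_iff_lt_mul ht).mp (by omega : M / t < k + 2)).le
  have l3 : (M : ℝ) / t ≤ M := by
    apply div_le_self hMR.le
    exact_mod_cast ht
  rw [← sub_sub_cancel (Real.log (M : ℝ)) (Real.log (t : ℝ)), sub_sub_cancel,
    ← Real.log_div hMR.ne' htR.ne']
  set y := (M : ℝ) / t with hy
  have hk0 : (0 : ℝ) ≤ k := by positivity
  have hy1 : 1 ≤ y := by linarith
  have ly : Real.log y ≤ Real.log M := Real.log_le_log (by linarith) l3
  have lk : Real.log ((k : ℝ) + 1) ≤ Real.log y := Real.log_le_log (by linarith) l1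
  have lk2 : Real.log ((k : ℝ) + 2) ≤ Real.log y + 1 := by
    have : Real.log ((k : ℝ) + 2) ≤ Real.log (y * Real.exp 1) := by
      apply Real.log_le_log (by linarith)
      have := Real.add_one_le_exp (1 : ℝ)
      nlinarith
    rwa [Real.log_mul (by linarith) (Real.exp_pos 1).ne', Real.log_exp] at this
  have m1 := mul_log_mono (by linarith : (1 : ℝ) ≤ k + 1) l1
  have m2 := mul_log_mono hy1 l2
  have b1 := (log_fact_bounds k).2
  have b2 := (log_fact_bounds (k + 1)).1
  have hf : Real.log ((k + 1 + 1).factorial : ℝ) =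
      Real.log ((k : ℝ) + 2) + Real.log ((k + 1).factorial : ℝ) := by
    rw [Nat.factorial_succ]
    push_cast
    rw [Real.log_mul (by positivity) (by positivity)]
    ring_nf
  rw [hf] at b2
  push_cast at b2
  rw [show (k : ℝ) + 1 + 1 = k + 2 by ring] at b2
  rw [hk, abs_le]
  constructor <;> nlinarith

lemma list_lower (l : List (ℕ × ℤ)) (L g : ℕ → ℝ) (e : ℝ)
    (h : ∀ p ∈ l, |L p.1 - g p.1| ≤ e) :
    (l.map fun p => (p.2 : ℝ) * g p.1).sum - ((l.map fun p => |p.2|).sum : ℤ) * e ≤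
      (l.map fun p => (p.2 : ℝ) * L p.1).sum := by
  induction l with
  | nil => simp
  | cons q l ih =>
    have h1 := ih (fun p hp => h p (List.mem_cons_of_mem _ hp))
    have h2 := h q List.mem_cons_self
    simp only [List.map_cons, List.sum_cons]
    have h3 : |(q.2 : ℝ) * (L q.1 - g q.1)| ≤ |(q.2 : ℝ)| * e := by
      rw [abs_mul]
      exact mul_le_mul_of_nonneg_left h2 (abs_nonneg _)
    have h4 := (abs_le.mp h3).1
    push_cast at h1 ⊢
    nlinarith

lemma log_seven_bounds : 1.9458 < Real.log 7 ∧ Real.log 7 < 1.9461 := by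
  have e : Real.log (2400 : ℝ) = 5 * Real.log 2 + Real.log 3 + 2 * Real.log 5 := by
    rw [show (2400 : ℝ) = 2 ^ 5 * 3 * 5 ^ 2 by norm_num, Real.log_mul (by norm_num) (by norm_num),
      Real.log_mul (by norm_num) (by norm_num), Real.log_pow, Real.log_pow]
    norm_num
  have e2 : Real.log (2401 : ℝ) = 4 * Real.log 7 := by
    rw [show (2401 : ℝ) = 7 ^ 4 by norm_num, Real.log_pow]
    norm_num
  have h1 : Real.log (2400 : ℝ) < Real.log 2401 := Real.log_lt_log (by norm_num) (by norm_num)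
  have h2 := Real.log_le_sub_one_of_pos (show (0 : ℝ) < 2401 / 2400 by norm_num)
  rw [Real.log_div (by norm_num) (by norm_num)] at h2
  have := Real.log_two_gt_d9
  have := Real.log_two_lt_d9
  have := Real.log_three_gt_d9
  have := Real.log_three_lt_d9
  have := Real.log_five_gt_d9
  have := Real.log_five_lt_d9
  constructor <;> linarith

lemma log_smooth (a b c d : ℕ) : Real.log ((2 : ℝ) ^ a * 3 ^ b * 5 ^ c * 7 ^ d) =
    a * Real.log 2 + b * Real.log 3 + c * Real.log 5 + d * Real.log 7 := by
  rw [Real.log_mul (by positivity) (by positivity), Real.log_mul (by positivity) (by positivity),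
    Real.log_mul (by positivity) (by positivity)]
  simp only [Real.log_pow]

lemma main_term (R ℓ : ℝ) (hR : 0 ≤ R) :
    0.0027 * R ≤ (wts.map fun p => (p.2 : ℝ) * (R / (p.1 : ℝ) * (ℓ - Real.log (p.1 : ℝ) - 1))).sum := by
  have h8 : Real.log 8 = 3 * Real.log 2 + 0 * Real.log 3 + 0 * Real.log 5 + 0 * Real.log 7 := by
    have h := log_smooth 3 0 0 0
    norm_num at h ⊢
    exact h
  have h14 : Real.log 14 = 1 * Real.log 2 + 0 * Real.log 3 + 0 * Real.log 5 + 1 * Real.log 7 := by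
    have h := log_smooth 1 0 0 1
    norm_num at h ⊢
    exact h
  have h16 : Real.log 16 = 4 * Real.log 2 + 0 * Real.log 3 + 0 * Real.log 5 + 0 * Real.log 7 := by
    have h := log_smooth 4 0 0 0
    norm_num at h ⊢
    exact h
  have h21 : Real.log 21 = 0 * Real.log 2 + 1 * Real.log 3 + 0 * Real.log 5 + 1 * Real.log 7 := by
    have h := log_smooth 0 1 0 1
    norm_num at h ⊢
    exact h
  have h24 : Real.log 24 = 3 * Real.log 2 + 1 * Real.log 3 + 0 * Real.log 5 + 0 * Real.log 7 := by
    have h := log_smooth 3 1 0 0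
    norm_num at h ⊢
    exact h
  have h35 : Real.log 35 = 0 * Real.log 2 + 0 * Real.log 3 + 1 * Real.log 5 + 1 * Real.log 7 := by
    have h := log_smooth 0 0 1 1
    norm_num at h ⊢
    exact h
  have h40 : Real.log 40 = 3 * Real.log 2 + 0 * Real.log 3 + 1 * Real.log 5 + 0 * Real.log 7 := by
    have h := log_smooth 3 0 1 0
    norm_num at h ⊢
    exact h
  have h48 : Real.log 48 = 4 * Real.log 2 + 1 * Real.log 3 + 0 * Real.log 5 + 0 * Real.log 7 := by
    have h := log_smooth 4 1 0 0
    norm_num at h ⊢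
    exact h
  have h56 : Real.log 56 = 3 * Real.log 2 + 0 * Real.log 3 + 0 * Real.log 5 + 1 * Real.log 7 := by
    have h := log_smooth 3 0 0 1
    norm_num at h ⊢
    exact h
  have h80 : Real.log 80 = 4 * Real.log 2 + 0 * Real.log 3 + 1 * Real.log 5 + 0 * Real.log 7 := by
    have h := log_smooth 4 0 1 0
    norm_num at h ⊢
    exact h
  have h84 : Real.log 84 = 2 * Real.log 2 + 1 * Real.log 3 + 0 * Real.log 5 + 1 * Real.log 7 := by
    have h := log_smooth 2 1 0 1
    norm_num at h ⊢
    exact h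
  have h105 : Real.log 105 = 0 * Real.log 2 + 1 * Real.log 3 + 1 * Real.log 5 + 1 * Real.log 7 := by
    have h := log_smooth 0 1 1 1
    norm_num at h ⊢
    exact h
  have h112 : Real.log 112 = 4 * Real.log 2 + 0 * Real.log 3 + 0 * Real.log 5 + 1 * Real.log 7 := by
    have h := log_smooth 4 0 0 1
    norm_num at h ⊢
    exact h
  have h120 : Real.log 120 = 3 * Real.log 2 + 1 * Real.log 3 + 1 * Real.log 5 + 0 * Real.log 7 := by
    have h := log_smooth 3 1 1 0
    norm_num at h ⊢
    exact h
  have h140 : Real.log 140 = 2 * Real.log 2 + 0 * Real.log 3 + 1 * Real.log 5 + 1 * Real.log 7 := by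
    have h := log_smooth 2 0 1 1
    norm_num at h ⊢
    exact h
  have h168 : Real.log 168 = 3 * Real.log 2 + 1 * Real.log 3 + 0 * Real.log 5 + 1 * Real.log 7 := by
    have h := log_smooth 3 1 0 1
    norm_num at h ⊢
    exact h
  have h240 : Real.log 240 = 4 * Real.log 2 + 1 * Real.log 3 + 1 * Real.log 5 + 0 * Real.log 7 := by
    have h := log_smooth 4 1 1 0
    norm_num at h ⊢
    exact h
  have h280 : Real.log 280 = 3 * Real.log 2 + 0 * Real.log 3 + 1 * Real.log 5 + 1 * Real.log 7 := by
    have h := log_smooth 3 0 1 1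
    norm_num at h ⊢
    exact h
  have h336 : Real.log 336 = 4 * Real.log 2 + 1 * Real.log 3 + 0 * Real.log 5 + 1 * Real.log 7 := by
    have h := log_smooth 4 1 0 1
    norm_num at h ⊢
    exact h
  have h840 : Real.log 840 = 3 * Real.log 2 + 1 * Real.log 3 + 1 * Real.log 5 + 1 * Real.log 7 := by
    have h := log_smooth 3 1 1 1
    norm_num at h ⊢
    exact h
  have h1680 : Real.log 1680 = 4 * Real.log 2 + 1 * Real.log 3 + 1 * Real.log 5 + 1 * Real.log 7 := by
    have h := log_smooth 4 1 1 1
    norm_num at h ⊢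
    exact h
  have key : (wts.map fun p => (p.2 : ℝ) * (R / (p.1 : ℝ) * (ℓ - Real.log (p.1 : ℝ) - 1))).sum =
      R * ((1/12) * Real.log 2 + (1/112) * Real.log 3 + (0) * Real.log 5 + (-1/30) * Real.log 7) := by
    simp only [wts, List.map_cons, List.map_nil, List.sum_cons, List.sum_nil]
    push_cast
    rw [h8, h14, h16, h21, h24, h35, h40, h48, h56, h80, h84, h105, h112, h120, h140, h168, h240, h280, h336, h840, h1680]
    ring
  rw [key, mul_comm]
  refine mul_le_mul_of_nonneg_left ?_ hR
  have := Real.log_two_gt_d9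
  have := Real.log_two_lt_d9
  have := Real.log_three_gt_d9
  have := Real.log_three_lt_d9
  have := Real.log_five_gt_d9
  have := Real.log_five_lt_d9
  have := log_seven_bounds.1
  have := log_seven_bounds.2
  linarith

/-- The large range. -/
lemma large_range (M : ℕ) (hM : 80000000 ≤ M) : ∃ p : ℕ, p.Prime ∧ M < 8 * p ∧ 7 * p ≤ M := by
  by_contra hcon
  have hno : ∀ p : ℕ, p.Prime → M < 8 * p → 7 * p ≤ M → False :=
    fun p h1 h2 h3 => hcon ⟨p, h1, h2, h3⟩
  have hup := sum_wts_upper M hno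
  have hlow := list_lower wts (fun t => Real.log ((M / t).factorial : ℝ))
    (fun t => (M : ℝ) / t * (Real.log M - Real.log t - 1)) (Real.log M + 1) (by
      intro p hp
      have h : ∀ p ∈ wts, 0 < p.1 ∧ p.1 ≤ 1680 := by decide
      exact stirling_real M p.1 (h p hp).1 (by have := (h p hp).2; omega))
  have hmain := main_term (M : ℝ) (Real.log M) (by positivity)
  have habs : (wts.map fun p => |p.2|).sum = 26 := by decide
  rw [habs] at hlow
  push_cast at hlow
  have hMR : (80000000 : ℝ) ≤ M := by exact_mod_cast hM
  have hpt := Chebyshev.psi_sub_theta_le (x := (M : ℝ) / 7) (by linarith)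
  have hps := Chebyshev.psi_le (x := (M : ℝ) / 1687) (by linarith)
  set R : ℝ := (M : ℝ) with hRdef
  set s := √(R / 7) with hs
  have hs0 : 0 ≤ s := Real.sqrt_nonneg _
  have hss : s ^ 2 = R / 7 := Real.sq_sqrt (by linarith)
  have hs1 : 3380 ≤ s := by
    apply Real.le_sqrt_of_sq_le
    linarith
  have hlog7 : Real.log (R / 7) = 2 * Real.log s := by
    rw [← hss, Real.log_pow]
    norm_num
  have hlogR : Real.log R = 2 * Real.log s + Real.log 7 := by
    rw [← hlog7, Real.log_div (by linarith) (by norm_num)]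
    ring
  have hq : √(R / 1687) ≤ s / 15 := by
    rw [Real.sqrt_le_left (by positivity), div_pow, hss]
    linarith
  have hlq : Real.log (R / 1687) ≤ 2 * Real.log s := by
    rw [← hlog7]
    apply Real.log_le_log (by linarith)
    linarith
  have hls : Real.log s ≤ s / 2048 + 6.63 := by
    have h1 := Real.log_le_sub_one_of_pos (show 0 < s / 2048 by linarith)
    rw [Real.log_div (by linarith) (by norm_num), show (2048 : ℝ) = 2 ^ 11 by norm_num,
      Real.log_pow] at h1
    have := Real.log_two_lt_d9
    push_cast at h1
    norm_num at h1 ⊢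
    linarith
  have hls0 : 0 ≤ Real.log s := Real.log_nonneg (by linarith)
  have hprod : √(R / 1687) * Real.log (R / 1687) ≤ s / 15 * (2 * Real.log s) :=
    mul_le_mul hq hlq (Real.log_nonneg (by linarith)) (by positivity)
  have hl4 : Real.log 4 < 1.3863 := by
    rw [show (4 : ℝ) = 2 ^ 2 by norm_num, Real.log_pow]
    have := Real.log_two_lt_d9
    push_cast
    linarith
  have hl4R : Real.log 4 * (R / 1687) ≤ 1.3863 * (R / 1687) :=
    mul_le_mul_of_nonneg_right hl4.le (by linarith)
  have hl7 := log_seven_bounds.2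
  rw [hlog7] at hpt
  rw [hlogR] at hlow hmain
  have hsl : s * Real.log s ≤ s * (s / 2048 + 6.63) := mul_le_mul_of_nonneg_left hls hs0
  have hR7 : R = 7 * s ^ 2 := by linarith
  have hfin : 0.0027 * R - 26 * (2 * Real.log s + Real.log 7 + 1) ≤
      2 * s * (2 * Real.log s) + (1.3863 * (R / 1687) + 2 * (s / 15 * (2 * Real.log s))) := by
    linarith
  rw [hR7] at hfin
  nlinarith

lemma chain_step (x : ℝ) (p q : ℕ) (hq : q.Prime) (h : 13 * q ≤ 15 * p)
    (ih : x < p → ∃ p : ℕ, p.Prime ∧ x < p ∧ (13 * p : ℝ) ≤ 15 * x) :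
    x < q → ∃ p : ℕ, p.Prime ∧ x < p ∧ (13 * p : ℝ) ≤ 15 * x := by
  intro hxq
  by_cases hp : x < p
  · exact ih hp
  · refine ⟨q, hq, hxq, ?_⟩
    have : (13 * q : ℝ) ≤ 15 * p := by exact_mod_cast h
    push Not at hp
    linarith

lemma small_range_primes (x : ℝ) (hx : 33 ≤ x) :
    x < (10677061 : ℕ) → ∃ p : ℕ, p.Prime ∧ x < p ∧ (13 * p : ℝ) ≤ 15 * x := by
  refine chain_step x 9253463 10677061 (by norm_num) (by norm_num) ?_
  refine chain_step x 8019679 9253463 (by norm_num) (by norm_num) ?_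
  refine chain_step x 6950423 8019679 (by norm_num) (by norm_num) ?_
  refine chain_step x 6023701 6950423 (by norm_num) (by norm_num) ?_
  refine chain_step x 5220541 6023701 (by norm_num) (by norm_num) ?_
  refine chain_step x 4524479 5220541 (by norm_num) (by norm_num) ?_
  refine chain_step x 3921227 4524479 (by norm_num) (by norm_num) ?_
  refine chain_step x 3398407 3921227 (by norm_num) (by norm_num) ?_
  refine chain_step x 2945291 3398407 (by norm_num) (by norm_num) ?_
  refine chain_step x 2552587 2945291 (by norm_num) (by norm_num) ?_
  refine chain_step x 2212247 2552587 (by norm_num) (by norm_num) ?_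
  refine chain_step x 1917301 2212247 (by norm_num) (by norm_num) ?_
  refine chain_step x 1661669 1917301 (by norm_num) (by norm_num) ?_
  refine chain_step x 1440119 1661669 (by norm_num) (by norm_num) ?_
  refine chain_step x 1248151 1440119 (by norm_num) (by norm_num) ?_
  refine chain_step x 1081741 1248151 (by norm_num) (by norm_num) ?_
  refine chain_step x 937511 1081741 (by norm_num) (by norm_num) ?_
  refine chain_step x 812519 937511 (by norm_num) (by norm_num) ?_
  refine chain_step x 704189 812519 (by norm_num) (by norm_num) ?_
  refine chain_step x 610301 704189 (by norm_num) (by norm_num) ?_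
  refine chain_step x 528929 610301 (by norm_num) (by norm_num) ?_
  refine chain_step x 458407 528929 (by norm_num) (by norm_num) ?_
  refine chain_step x 397297 458407 (by norm_num) (by norm_num) ?_
  refine chain_step x 344327 397297 (by norm_num) (by norm_num) ?_
  refine chain_step x 298427 344327 (by norm_num) (by norm_num) ?_
  refine chain_step x 258637 298427 (by norm_num) (by norm_num) ?_
  refine chain_step x 224153 258637 (by norm_num) (by norm_num) ?_
  refine chain_step x 194269 224153 (by norm_num) (by norm_num) ?_
  refine chain_step x 168391 194269 (by norm_num) (by norm_num) ?_
  refine chain_step x 145949 168391 (by norm_num) (by norm_num) ?_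
  refine chain_step x 126499 145949 (by norm_num) (by norm_num) ?_
  refine chain_step x 109639 126499 (by norm_num) (by norm_num) ?_
  refine chain_step x 95027 109639 (by norm_num) (by norm_num) ?_
  refine chain_step x 82361 95027 (by norm_num) (by norm_num) ?_
  refine chain_step x 71389 82361 (by norm_num) (by norm_num) ?_
  refine chain_step x 61871 71389 (by norm_num) (by norm_num) ?_
  refine chain_step x 53623 61871 (by norm_num) (by norm_num) ?_
  refine chain_step x 46477 53623 (by norm_num) (by norm_num) ?_
  refine chain_step x 40289 46477 (by norm_num) (by norm_num) ?_
  refine chain_step x 34919 40289 (by norm_num) (by norm_num) ?_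
  refine chain_step x 30271 34919 (by norm_num) (by norm_num) ?_
  refine chain_step x 26251 30271 (by norm_num) (by norm_num) ?_
  refine chain_step x 22751 26251 (by norm_num) (by norm_num) ?_
  refine chain_step x 19727 22751 (by norm_num) (by norm_num) ?_
  refine chain_step x 17107 19727 (by norm_num) (by norm_num) ?_
  refine chain_step x 14827 17107 (by norm_num) (by norm_num) ?_
  refine chain_step x 12853 14827 (by norm_num) (by norm_num) ?_
  refine chain_step x 11161 12853 (by norm_num) (by norm_num) ?_
  refine chain_step x 9679 11161 (by norm_num) (by norm_num) ?_
  refine chain_step x 8389 9679 (by norm_num) (by norm_num) ?_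
  refine chain_step x 7283 8389 (by norm_num) (by norm_num) ?_
  refine chain_step x 6323 7283 (by norm_num) (by norm_num) ?_
  refine chain_step x 5483 6323 (by norm_num) (by norm_num) ?_
  refine chain_step x 4759 5483 (by norm_num) (by norm_num) ?_
  refine chain_step x 4133 4759 (by norm_num) (by norm_num) ?_
  refine chain_step x 3583 4133 (by norm_num) (by norm_num) ?_
  refine chain_step x 3109 3583 (by norm_num) (by norm_num) ?_
  refine chain_step x 2699 3109 (by norm_num) (by norm_num) ?_
  refine chain_step x 2341 2699 (by norm_num) (by norm_num) ?_
  refine chain_step x 2029 2341 (by norm_num) (by norm_num) ?_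
  refine chain_step x 1759 2029 (by norm_num) (by norm_num) ?_
  refine chain_step x 1531 1759 (by norm_num) (by norm_num) ?_
  refine chain_step x 1327 1531 (by norm_num) (by norm_num) ?_
  refine chain_step x 1163 1327 (by norm_num) (by norm_num) ?_
  refine chain_step x 1009 1163 (by norm_num) (by norm_num) ?_
  refine chain_step x 877 1009 (by norm_num) (by norm_num) ?_
  refine chain_step x 761 877 (by norm_num) (by norm_num) ?_
  refine chain_step x 661 761 (by norm_num) (by norm_num) ?_
  refine chain_step x 577 661 (by norm_num) (by norm_num) ?_
  refine chain_step x 503 577 (by norm_num) (by norm_num) ?_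
  refine chain_step x 439 503 (by norm_num) (by norm_num) ?_
  refine chain_step x 383 439 (by norm_num) (by norm_num) ?_
  refine chain_step x 337 383 (by norm_num) (by norm_num) ?_
  refine chain_step x 293 337 (by norm_num) (by norm_num) ?_
  refine chain_step x 263 293 (by norm_num) (by norm_num) ?_
  refine chain_step x 229 263 (by norm_num) (by norm_num) ?_
  refine chain_step x 199 229 (by norm_num) (by norm_num) ?_
  refine chain_step x 181 199 (by norm_num) (by norm_num) ?_
  refine chain_step x 157 181 (by norm_num) (by norm_num) ?_
  refine chain_step x 139 157 (by norm_num) (by norm_num) ?_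
  refine chain_step x 127 139 (by norm_num) (by norm_num) ?_
  refine chain_step x 113 127 (by norm_num) (by norm_num) ?_
  refine chain_step x 101 113 (by norm_num) (by norm_num) ?_
  refine chain_step x 89 101 (by norm_num) (by norm_num) ?_
  refine chain_step x 83 89 (by norm_num) (by norm_num) ?_
  refine chain_step x 73 83 (by norm_num) (by norm_num) ?_
  refine chain_step x 67 73 (by norm_num) (by norm_num) ?_
  refine chain_step x 61 67 (by norm_num) (by norm_num) ?_
  refine chain_step x 53 61 (by norm_num) (by norm_num) ?_
  refine chain_step x 47 53 (by norm_num) (by norm_num) ?_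
  refine chain_step x 41 47 (by norm_num) (by norm_num) ?_
  refine chain_step x 37 41 (by norm_num) (by norm_num) ?_
  intro h
  refine ⟨37, by norm_num, h, ?_⟩
  push_cast
  linarith

lemma frac_bound (x : ℝ) (hx : 33 ≤ x) (p : ℝ) (h : 13 * p ≤ 15 * x) : p ≤ 2 * x / Real.sqrt 3 := by
  have h3 : 0 < Real.sqrt 3 := by positivity
  have h4 : Real.sqrt 3 ≤ 26 / 15 := by
    rw [Real.sqrt_le_left (by norm_num)]
    norm_num
  rw [le_div_iff₀ h3]
  by_cases hp : 0 ≤ p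
  · nlinarith
  · nlinarith

theorem stmt_3 (x : ℝ) (hx : 33 ≤ x) :
    ∃ p : ℕ, p.Prime ∧ x < p ∧ (p : ℝ) ≤ 2 * x / Real.sqrt 3 := by
  by_cases hs : x < (10677061 : ℕ)
  · obtain ⟨p, h1, h2, h3⟩ := small_range_primes x hx hs
    exact ⟨p, h1, h2, frac_bound x hx p h3⟩
  · push_cast at hs
    have hx8 : (0 : ℝ) ≤ 8 * x := by linarith
    obtain ⟨p, h1, h2, h3⟩ := large_range ⌊8 * x⌋₊ (Nat.le_floor (by push_cast; linarith))
    have h2' : 8 * x < 8 * p := by exact_mod_cast (Nat.floor_lt hx8).mp h2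
    have h3' : (7 * p : ℝ) ≤ 8 * x := by exact_mod_cast (Nat.le_floor_iff hx8).mp h3
    exact ⟨p, h1, by linarith, frac_bound x hx p (by linarith)⟩
end

section
/- Let m₁ and m₂ be positive integers with (3/2)·m₁ ≤ m₂ < 2·m₁, and suppose A ⊆ {0,1,...,m₁−1} satisfies 1 ≤ σ_A(n mod m₁) ≤ r for every integer n, where σ counts ordered pairs (a₁,a₂) ∈ A×A with a₁+a₂ ≡ n (mod m₁). Let r' = m₂ − m₁ and B = A ∪ {a + r' : a ∈ A}. Then for every integer n, the number of ordered pairs (b₁,b₂) ∈ B×B with b₁+b₂ ≡ n (mod m₂) is at most 4r. -/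
theorem stmt_7 (m₁ m₂ r : ℕ) (hm₁ : 0 < m₁) (h1 : 3 * m₁ ≤ 2 * m₂) (h2 : m₂ < 2 * m₁)
    (A : Finset ℕ) (hA : A ⊆ Finset.range m₁)
    (hrep : ∀ n : ℕ,
      1 ≤ ((A ×ˢ A).filter (fun p => (p.1 + p.2) % m₁ = n % m₁)).card ∧
      ((A ×ˢ A).filter (fun p => (p.1 + p.2) % m₁ = n % m₁)).card ≤ r) :
    ∀ n : ℕ,
      (((A ∪ A.image (fun a => a + (m₂ - m₁))) ×ˢ (A ∪ A.image (fun a => a + (m₂ - m₁)))).filter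
        (fun p => (p.1 + p.2) % m₂ = n % m₂)).card ≤ 4 * r := by
  intro n
  obtain ⟨d, rfl⟩ : ∃ d, m₂ = m₁ + d := ⟨m₂ - m₁, by omega⟩
  rw [Nat.add_sub_cancel_left]
  have hlt : ∀ a ∈ A, a < m₁ := fun a ha => Finset.mem_range.mp (hA ha)
  obtain ⟨t, ht, htlt⟩ : ∃ t, n % (m₁ + d) = t ∧ t < m₁ + d :=
    ⟨_, rfl, Nat.mod_lt _ (by omega)⟩
  rw [ht]
  -- number of pairs with an exact integer sum
  let R : ℤ → ℕ := fun x => ((A ×ˢ A).filter (fun p => (p.1 : ℤ) + p.2 = x)).card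
  have hR0 : ∀ x : ℤ, (x < 0 ∨ 2 * (m₁ : ℤ) - 2 < x) → R x = 0 := by
    intro x hx
    refine Finset.card_eq_zero.mpr (Finset.filter_eq_empty_iff.mpr ?_)
    rintro ⟨a, b⟩ hp
    rw [Finset.mem_product] at hp
    have := hlt _ hp.1
    have := hlt _ hp.2
    dsimp only at *
    omega
  have hRR : ∀ x : ℤ, R x + R (x + m₁) ≤ r := by
    intro x
    have hm : (0 : ℤ) < m₁ := by exact_mod_cast hm₁
    refine le_trans ?_ (hrep (x % m₁).toNat).2
    rw [← Finset.card_union_of_disjoint]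
    · apply Finset.card_le_card
      rintro ⟨a, b⟩ hp
      simp only [Finset.mem_union, Finset.mem_filter] at hp ⊢
      have key : ((a + b : ℕ) : ℤ) % m₁ = x % m₁ := by
        rcases hp with hp | hp
        · rw [← hp.2]; push_cast; rfl
        · push_cast; rw [hp.2]; simp
      refine ⟨by tauto, ?_⟩
      have h3 : (((x % m₁).toNat : ℕ) : ℤ) = x % m₁ :=
        Int.toNat_of_nonneg (Int.emod_nonneg _ hm.ne')
      zify
      rw [h3]
      push_cast at key
      rw [key, Int.emod_emod_of_dvd _ (dvd_refl _)]
    · rw [Finset.disjoint_left]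
      rintro ⟨a, b⟩ hp hq
      simp only [Finset.mem_filter] at hp hq
      omega
  let N : ℕ → ℕ := fun k => ((A ×ˢ A).filter (fun p => (p.1 + p.2 + k) % (m₁ + d) = t)).card
  have hN : ∀ k ≤ 2 * d, N k ≤ R (t - k) + R (t + m₁ + d - k) := by
    intro k hk
    refine le_trans (Finset.card_le_card ?_) (Finset.card_union_le _ _)
    rintro ⟨a, b⟩ hp
    simp only [Finset.mem_union, Finset.mem_filter, Finset.mem_product] at hp ⊢
    have ha := hlt _ hp.1.1
    have hb := hlt _ hp.1.2
    have h4 := Nat.div_add_mod (a + b + k) (m₁ + d)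
    have h5 : (a + b + k) / (m₁ + d) < 2 := by
      rw [Nat.div_lt_iff_lt_mul (by omega)]; omega
    rw [hp.2] at h4
    generalize (a + b + k) / (m₁ + d) = q at h4 h5
    have : q = 0 ∨ q = 1 := by clear h4; omega
    rcases this with h | h <;> rw [h] at h4
    · left; exact ⟨hp.1, by omega⟩
    · right; exact ⟨hp.1, by omega⟩
  let F : ℕ → ℕ → Finset (ℕ × ℕ) := fun u v =>
    ((A ×ˢ A).filter (fun p => (p.1 + p.2 + (u + v)) % (m₁ + d) = t)).image
      (fun p => (p.1 + u, p.2 + v))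
  have hF : ∀ u v, (F u v).card ≤ N (u + v) := fun u v => Finset.card_image_le
  have hFm : ∀ u v a b, a ∈ A → b ∈ A → (a + u + (b + v)) % (m₁ + d) = t →
      (a + u, b + v) ∈ F u v := by
    intro u v a b ha hb h
    refine Finset.mem_image.mpr ⟨(a, b), ?_, rfl⟩
    simp only [Finset.mem_filter, Finset.mem_product]
    refine ⟨⟨ha, hb⟩, ?_⟩
    rw [← h]; congr 1; ring
  have hsub : (((A ∪ A.image (fun a => a + d)) ×ˢ (A ∪ A.image (fun a => a + d))).filter
        (fun p => (p.1 + p.2) % (m₁ + d) = t)) ⊆ (F 0 0 ∪ F 0 d) ∪ (F d 0 ∪ F d d) := by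
    rintro ⟨x, y⟩ hp
    simp only [Finset.mem_union, Finset.mem_filter, Finset.mem_product, Finset.mem_image] at hp ⊢
    obtain ⟨⟨ha | ⟨a, ha, rfl⟩, hb | ⟨b, hb, rfl⟩⟩, h⟩ := hp
    · exact Or.inl (Or.inl (hFm 0 0 x y ha hb h))
    · exact Or.inl (Or.inr (hFm 0 d x b ha hb h))
    · exact Or.inr (Or.inl (hFm d 0 a y ha hb h))
    · exact Or.inr (Or.inr (hFm d d a b ha hb h))
  have c0 := Finset.card_le_card hsub
  have c1 := Finset.card_union_le (F 0 0 ∪ F 0 d) (F d 0 ∪ F d d)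
  have c2 := Finset.card_union_le (F 0 0) (F 0 d)
  have c3 := Finset.card_union_le (F d 0) (F d d)
  have f1 := hF 0 0
  have f2 := hF 0 d
  have f3 := hF d 0
  have f4 := hF d d
  have n0 := hN 0 (by omega)
  have n1 := hN d (by omega)
  have n2 := hN (d + d) (by omega)
  simp only [add_zero, zero_add] at f1 f2 f3 f4
  have e1 : (t : ℤ) - (0 : ℕ) = t := by simp
  have e2 : (t : ℤ) + m₁ + d - (0 : ℕ) = t + m₁ + d := by simp
  have e3 : (t : ℤ) + m₁ + d - (d : ℕ) = t + m₁ := by ring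
  have e4 : (t : ℤ) + m₁ + d - (d + d : ℕ) = t - d + m₁ := by push_cast; ring
  rw [e1, e2] at n0
  rw [e3] at n1
  rw [e4] at n2
  have g1 := hRR t
  have g2 := hRR (t - d)
  have g3 := hRR (t - (d + d : ℕ))
  have g4 := hRR (t + m₁ + d)
  by_cases hc : 2 * d ≤ t
  · have z1 := hR0 (t + m₁) (by omega)
    have z2 := hR0 (t + m₁ + d) (by omega)
    omega
  · have z0 := hR0 (t - (d + d : ℕ)) (by omega)
    by_cases hc2 : t + d + 2 ≤ m₁
    · have z1 := hR0 (t - d) (by omega)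
      omega
    · have z2 := hR0 (t + m₁ + d) (by omega)
      omega
end
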